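/- Let V be a set of n vertices and let 𝒯 be a set of triangles on V having no rainbow triangle with respect to 𝒯. Then |𝒯| ≤ n²/4. -/

import Mathlib

/-!
Every triangle of a family without rainbow triangles has a private edge, one that lies in no other
member of the family: if `ab` and `ac` lie in members `t₁, t₂ ≠ abc`, then `t₁ ≠ t₂` (a common value
would contain `a, b, c`), and `t₁`, `t₂` together with `abc`, which supplies `bc`, make `abc` itself
rainbow (`exists_private_edge`). Choosing one private edge for each member gives a graph with
`|𝒯|` edges. Its triangles would be rainbow, since distinct edges were chosen by distinct members,
so the graph is triangle-free and Mantel's theorem bounds its number of edges by `n² / 4`.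
-/

/-- A family `𝒯` of triangles (3-element vertex subsets) has a rainbow triangle if there is
a triangle `s` together with three pairwise distinct members `t₁, t₂, t₃` of `𝒯` such that
the three edges (2-element subsets) of `s` can be enumerated `e₁, e₂, e₃` with `eᵢ ⊆ tᵢ`. -/
def HasRainbowTriangle {V : Type*} (𝒯 : Finset (Finset V)) : Prop :=
  ∃ s e₁ e₂ e₃ t₁ t₂ t₃ : Finset V,
    s.card = 3 ∧
    t₁ ∈ 𝒯 ∧ t₂ ∈ 𝒯 ∧ t₃ ∈ 𝒯 ∧
    t₁ ≠ t₂ ∧ t₁ ≠ t₃ ∧ t₂ ≠ t₃ ∧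
    e₁ ≠ e₂ ∧ e₁ ≠ e₃ ∧ e₂ ≠ e₃ ∧
    e₁.card = 2 ∧ e₂.card = 2 ∧ e₃.card = 2 ∧
    e₁ ⊆ s ∧ e₂ ⊆ s ∧ e₃ ⊆ s ∧
    e₁ ⊆ t₁ ∧ e₂ ⊆ t₂ ∧ e₃ ⊆ t₃

/-- Vertex form of the definition: the edges of the triangle `abc` are covered by three distinct
members of the family. -/
lemma hasRainbowTriangle_of_vertices {V : Type*} [DecidableEq V] {𝒯 : Finset (Finset V)}
    {a b c : V} {t₁ t₂ t₃ : Finset V} (hab : a ≠ b) (hac : a ≠ c) (hbc : b ≠ c)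
    (h₁ : t₁ ∈ 𝒯) (h₂ : t₂ ∈ 𝒯) (h₃ : t₃ ∈ 𝒯) (h₁₂ : t₁ ≠ t₂) (h₁₃ : t₁ ≠ t₃) (h₂₃ : t₂ ≠ t₃)
    (e₁ : {a, b} ⊆ t₁) (e₂ : {a, c} ⊆ t₂) (e₃ : {b, c} ⊆ t₃) : HasRainbowTriangle 𝒯 := by
  refine ⟨{a, b, c}, {a, b}, {a, c}, {b, c}, t₁, t₂, t₃, Finset.card_eq_three.2
    ⟨a, b, c, hab, hac, hbc, rfl⟩, h₁, h₂, h₃, h₁₂, h₁₃, h₂₃, ?_, ?_, ?_,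
    Finset.card_pair hab, Finset.card_pair hac, Finset.card_pair hbc, ?_, ?_, ?_, e₁, e₂, e₃⟩
  · intro h
    have : b ∈ ({a, c} : Finset V) := h ▸ by simp
    grind
  · intro h
    have : a ∈ ({b, c} : Finset V) := h ▸ by simp
    grind
  · intro h
    have : a ∈ ({b, c} : Finset V) := h ▸ by simp
    grind
  all_goals intro x; simp; tauto

lemma exists_private_edge {V : Type*} [DecidableEq V] {𝒯 : Finset (Finset V)}
    (htri : ∀ t ∈ 𝒯, t.card = 3) (hnr : ¬ HasRainbowTriangle 𝒯) {t : Finset V} (ht : t ∈ 𝒯) :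
    ∃ e ⊆ t, e.card = 2 ∧ ∀ t' ∈ 𝒯, e ⊆ t' → t' = t := by
  obtain ⟨a, b, c, hab, hac, hbc, rfl⟩ := Finset.card_eq_three.1 (htri t ht)
  by_contra! H
  obtain ⟨t₁, h₁, e₁, n₁⟩ := H {a, b} (by intro x; simp; tauto) (Finset.card_pair hab)
  obtain ⟨t₂, h₂, e₂, n₂⟩ := H {a, c} (by intro x; simp; tauto) (Finset.card_pair hac)
  refine hnr (hasRainbowTriangle_of_vertices hab hac hbc h₁ h₂ ht ?_ n₁ n₂ e₁ e₂
    (by intro x; simp; tauto))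
  rintro rfl
  refine n₁ (Finset.eq_of_subset_of_card_le ?_ ?_).symm
  · intro x hx
    have hb : b ∈ t₁ := e₁ (by simp)
    have hc : c ∈ t₁ := e₂ (by simp)
    have ha : a ∈ t₁ := e₁ (by simp)
    grind
  · rw [htri _ h₁, htri _ ht]

/-- Mantel's theorem. -/
lemma four_mul_card_edgeFinset_le {V : Type*} [Fintype V] (G : SimpleGraph V)
    [DecidableRel G.Adj] (hG : G.CliqueFree 3) :
    4 * G.edgeFinset.card ≤ Fintype.card V ^ 2 := by
  have h := hG.card_edgeFinset_le
  have hc : (Fintype.card V % 2).choose 2 = 0 := Nat.choose_eq_zero_of_lt (by omega)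
  simp only [hc] at h
  omega

/-- A set of triangles on `n` vertices with no rainbow triangle has size at most `n²/4`. -/
theorem card_le_quarter_of_no_rainbow_triangle
    {V : Type*} [Fintype V] [DecidableEq V]
    (𝒯 : Finset (Finset V))
    (htri : ∀ t ∈ 𝒯, t.card = 3)
    (hnr : ¬ HasRainbowTriangle 𝒯) :
    4 * 𝒯.card ≤ (Fintype.card V) ^ 2 := by
  classical
  have key (t : Finset V) (ht : t ∈ 𝒯) := exists_private_edge htri hnr ht
  choose! f hsub hcard huniq using key
  let G : SimpleGraph V :=
    { Adj := fun u v => u ≠ v ∧ ∃ t ∈ 𝒯, f t = {u, v}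
      symm := ⟨fun u v ⟨h, t, ht, e⟩ => ⟨h.symm, t, ht, by rw [e, Finset.pair_comm]⟩⟩
      loopless := ⟨fun u h => h.1 rfl⟩ }
  have hfree : G.CliqueFree 3 := by
    intro s hs
    obtain ⟨a, b, c, ⟨hab, t₁, h₁, e₁⟩, ⟨hac, t₂, h₂, e₂⟩, ⟨hbc, t₃, h₃, e₃⟩, -⟩ :=
      SimpleGraph.is3Clique_iff.1 hs
    refine hnr (hasRainbowTriangle_of_vertices hab hac hbc h₁ h₂ h₃ ?_ ?_ ?_
      (e₁ ▸ hsub _ h₁) (e₂ ▸ hsub _ h₂) (e₃ ▸ hsub _ h₃))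
    · rintro rfl
      have : b ∈ ({a, c} : Finset V) := e₂ ▸ e₁ ▸ by simp
      grind
    · rintro rfl
      have : a ∈ ({b, c} : Finset V) := e₃ ▸ e₁ ▸ by simp
      grind
    · rintro rfl
      have : a ∈ ({b, c} : Finset V) := e₃ ▸ e₂ ▸ by simp
      grind
  have hinj : Set.InjOn f 𝒯 := fun t ht t' ht' h => huniq t' ht' t ht (h ▸ hsub t ht)
  have himg : 𝒯.image f ⊆ G.edgeFinset.image Sym2.toFinset := by
    intro e he
    obtain ⟨t, ht, rfl⟩ := Finset.mem_image.1 he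
    obtain ⟨u, v, huv, e⟩ := Finset.card_eq_two.1 (hcard t ht)
    refine Finset.mem_image.2 ⟨s(u, v), ?_, ?_⟩
    · rw [SimpleGraph.mem_edgeFinset, SimpleGraph.mem_edgeSet]
      exact ⟨huv, t, ht, e⟩
    · ext x
      simp [e]
  have hle : 𝒯.card ≤ G.edgeFinset.card := by
    rw [← Finset.card_image_of_injOn hinj]
    exact (Finset.card_le_card himg).trans Finset.card_image_le
  have := four_mul_card_edgeFinset_le G hfree
  omega
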